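/- Assume condition (A2) holds with limit I ∈ (0,∞) and that ϱ_α ∈ (0,1) satisfies ϱ_α → 0 and |log ϱ_α|/|log α| → 0 as α → 0. Let T_α = T(h_α) be the SR procedure with threshold h_α = (1−α)/(ϱ_α α). Then (i) limsup_{α→0} (1/|log α|)·sup_{ν≥0} R_ν(T_α) ≤ 1/I; and (ii) if in addition k*_α satisfies k*_α → ∞ and |log α| + k*_α·log(1−ϱ_α) → +∞ as α → 0, then limsup_{α→0} (1/|log α|)·max_{0≤ν≤k*_α} R*_ν(T_α) ≤ 1/I. -/

import Mathlib

/-!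
Since `R_{ν+n} ≥ exp (Z_{ν+n}^ν)`, a delay `T(h) - ν > n` forces `Z_{ν+n}^ν < log h`, which for
`n ≥ (log h) / J` is an event `Z_{ν+n}^ν < J n`. For `J < I` the probabilities of these events have
a finite sum, uniformly in `ν`, by (A2). Hence `E_ν (T(h) - ν)⁺ ≤ (log h) / J + O(1)`, and letting
`h → ∞`, then `J ↑ I`, gives the bound on the risk.

The conditional risk is larger by the factor `1 / P_ν(T(h) > ν) = 1 / P_∞(T(h) > ν)`. Under `P_∞`
the process `R_n` is a nonnegative submartingale with mean `n`, so Doob's maximal inequality gives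
`P_∞(T(h) ≤ ν) ≤ ν / h`. For `h = (1 - α) / (ϱ_α α)` this is negligible for all `ν ≤ k*_α`,
because `k*_α ϱ_α ≤ -k*_α log (1 - ϱ_α) ≤ |log α|` for small `α`.
-/

open MeasureTheory Filter Set Topology ENNReal

noncomputable section

/-- A general change-point model: a filtration `F` on `Ω`, probability measures `P k`
(the change occurs immediately after time `k`) and `Pinf` (no change), such that `P k`
and `Pinf` agree on `F n` for `n ≤ k` and are mutually absolutely continuous
on `F n` for `n > k`. -/
structure ChangePointModel (Ω : Type) [m0 : MeasurableSpace Ω] where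
  F : ℕ → MeasurableSpace Ω
  F_le : ∀ n, F n ≤ m0
  F_mono : Monotone F
  F_zero : F 0 = ⊥
  P : ℕ → Measure Ω
  Pinf : Measure Ω
  P_prob : ∀ k, IsProbabilityMeasure (P k)
  Pinf_prob : IsProbabilityMeasure Pinf
  agree : ∀ k n : ℕ, n ≤ k → (P k).trim (F_le n) = Pinf.trim (F_le n)
  ac₁ : ∀ k n : ℕ, k < n → (P k).trim (F_le n) ≪ Pinf.trim (F_le n)
  ac₂ : ∀ k n : ℕ, k < n → Pinf.trim (F_le n) ≪ (P k).trim (F_le n)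

namespace ChangePointModel

variable {Ω : Type} [m0 : MeasurableSpace Ω] (M : ChangePointModel Ω)

/-- The log-likelihood ratio `Z n k = log (d(P k|F n)/d(P∞|F n))`. -/
def Z (n k : ℕ) (ω : Ω) : ℝ :=
  Real.log ((((M.P k).trim (M.F_le n)).rnDeriv (M.Pinf.trim (M.F_le n))) ω).toReal

/-- A detection procedure: a stopping time of the filtration `F` with values in `{1,2,…,∞}`. -/
def IsDetection (τ : Ω → ℕ∞) : Prop :=
  (∀ ω, 1 ≤ τ ω) ∧ ∀ n : ℕ, MeasurableSet[M.F n] {ω | τ ω ≤ (n : ℕ∞)}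

/-- The detection risk `R_ν(τ) = E_ν (τ - ν)⁺`. -/
def risk (ν : ℕ) (τ : Ω → ℕ∞) : ℝ≥0∞ :=
  ∫⁻ ω, ((τ ω - (ν : ℕ∞) : ℕ∞) : ℝ≥0∞) ∂(M.P ν)

/-- The conditional detection risk `R*_ν(τ) = E_ν (τ - ν | τ > ν)`. -/
def crisk (ν : ℕ) (τ : Ω → ℕ∞) : ℝ≥0∞ :=
  M.risk ν τ / M.P ν {ω | (ν : ℕ∞) < τ ω}

/-- The moment-`ℓ` detection risk `E_ν ((τ - ν)⁺)^ℓ`. -/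
def riskPow (ℓ : ℝ) (ν : ℕ) (τ : Ω → ℕ∞) : ℝ≥0∞ :=
  ∫⁻ ω, ((τ ω - (ν : ℕ∞) : ℕ∞) : ℝ≥0∞) ^ ℓ ∂(M.P ν)

/-- The conditional moment-`ℓ` detection risk `E_ν ((τ - ν)^ℓ | τ > ν)`. -/
def criskPow (ℓ : ℝ) (ν : ℕ) (τ : Ω → ℕ∞) : ℝ≥0∞ :=
  M.riskPow ℓ ν τ / M.P ν {ω | (ν : ℕ∞) < τ ω}

/-- The Bayesian class `Δ(α,ϱ)` of detection procedures with weighted probability of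
false alarm at most `α` (geometric prior with parameter `ϱ`). -/
def Delta (α ϱ : ℝ) : Set (Ω → ℕ∞) :=
  {τ | M.IsDetection τ ∧
    ∑' k : ℕ, ENNReal.ofReal (ϱ * (1 - ϱ) ^ k) * M.Pinf {ω | τ ω ≤ (k : ℕ∞)}
      ≤ ENNReal.ofReal α}

/-- The Shiryaev–Roberts statistic `R_n = ∑_{k=1}^n exp (Z_n^{k-1})`. -/
def SRstat (n : ℕ) (ω : Ω) : ℝ :=
  ∑ k ∈ Finset.range n, Real.exp (M.Z n k ω)

/-- The Shiryaev–Roberts procedure with threshold `h`. -/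
def SR (h : ℝ) (ω : Ω) : ℕ∞ :=
  sInf {n : ℕ∞ | ∃ m : ℕ, n = (m : ℕ∞) ∧ 1 ≤ m ∧ h ≤ M.SRstat m ω}

/-- Condition (A1): `Z (k+n) k / n → I` almost surely under `P k`, for every `k`. -/
def CondA1 (I : ℝ) : Prop :=
  ∀ k : ℕ, ∀ᵐ ω ∂(M.P k),
    Tendsto (fun n : ℕ => M.Z (k + n) k ω / n) atTop (𝓝 I)

/-- Condition (A2): uniform complete convergence of `Z (k+n) k / n` to `I`. -/
def CondA2 (I : ℝ) : Prop :=
  ∀ ε : ℝ, 0 < ε →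
    (∑' n : ℕ, ⨆ k : ℕ,
      M.P k {ω | ε < |M.Z (k + (n + 1)) k ω / (n + 1) - I|}) < ⊤

/-- Uniform `r`-complete convergence of `Z (k+n) k / n` to `I`. -/
def CondAr (r I : ℝ) : Prop :=
  ∀ ε : ℝ, 0 < ε →
    (∑' n : ℕ, ENNReal.ofReal ((n + 1 : ℝ) ^ (r - 1)) * ⨆ k : ℕ,
      M.P k {ω | ε < |M.Z (k + (n + 1)) k ω / (n + 1) - I|}) < ⊤

/-- The class `H(β,k*,m*)` : local probability of a false alarm in windows of
length `m*` starting at `1 ≤ k ≤ k* - m*` is at most `β`. -/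
def Hclass (β : ℝ) (kstar mstar : ℕ) : Set (Ω → ℕ∞) :=
  {τ | M.IsDetection τ ∧ ∀ k : ℕ, 1 ≤ k → k + mstar ≤ kstar →
    M.Pinf {ω | (k : ℕ∞) ≤ τ ω ∧ τ ω < ((k + mstar : ℕ) : ℕ∞)} ≤ ENNReal.ofReal β}

/-- The class `H*(β,k*,m*)` : local conditional probability of a false alarm
`P_∞(τ < k+m* | τ > k)` is at most `β` for `1 ≤ k ≤ k* - m*`. -/
def HclassStar (β : ℝ) (kstar mstar : ℕ) : Set (Ω → ℕ∞) :=
  {τ | M.IsDetection τ ∧ ∀ k : ℕ, 1 ≤ k → k + mstar ≤ kstar →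
    M.Pinf {ω | (k : ℕ∞) < τ ω ∧ τ ω < ((k + mstar : ℕ) : ℕ∞)}
        / M.Pinf {ω | (k : ℕ∞) < τ ω} ≤ ENNReal.ofReal β}

end ChangePointModel

/-- `ϱ_{1,β} = 1/(1+|log β|)`. -/
def rho1 (β : ℝ) : ℝ := 1 / (1 + |Real.log β|)

/-- `ϱ_{2,β} = ϱ_{1,β}/(1+|log|log β||)`. -/
def rho2 (β : ℝ) : ℝ := rho1 β / (1 + |Real.log (|Real.log β|)|)

/-- `α₁(β,m*) = β + (1-ϱ_{1,β})^{m*+1}`. -/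
def alpha1 (β : ℝ) (m : ℕ) : ℝ := β + (1 - rho1 β) ^ (m + 1)

/-- `α₂(β,k*) = β (1-ϱ_{2,β})^{k*}`. -/
def alpha2 (β : ℝ) (k : ℕ) : ℝ := β * (1 - rho2 β) ^ k

/-- `α₃(β,k*) = β (1-ϱ_{2,β})^{k*} / (1+β)`. -/
def alpha3 (β : ℝ) (k : ℕ) : ℝ := β * (1 - rho2 β) ^ k / (1 + β)

lemma tsum_ite_lt_eq_toENNReal (x : ℕ∞) :
    ∑' n : ℕ, (if (n : ℕ∞) < x then 1 else 0 : ℝ≥0∞) = x := by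
  induction x with
  | top => simp
  | coe m =>
    rw [tsum_eq_sum (s := Finset.range m) fun n hn => if_neg (by simpa using hn)]
    simp [Finset.sum_ite_of_true (s := Finset.range m)]

lemma lintegral_toENNReal_eq_tsum_measure_lt {Ω : Type*} [MeasurableSpace Ω] (μ : Measure Ω)
    {f : Ω → ℕ∞} (hf : ∀ n : ℕ, MeasurableSet {ω | (n : ℕ∞) < f ω}) :
    ∫⁻ ω, (f ω : ℝ≥0∞) ∂μ = ∑' n : ℕ, μ {ω | (n : ℕ∞) < f ω} := by
  calc ∫⁻ ω, (f ω : ℝ≥0∞) ∂μ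
      = ∫⁻ ω, ∑' n : ℕ, {ω | (n : ℕ∞) < f ω}.indicator 1 ω ∂μ := by
        simp only [indicator_apply, mem_ofPred_eq, Pi.one_apply, tsum_ite_lt_eq_toENNReal]
    _ = ∑' n : ℕ, ∫⁻ ω, {ω | (n : ℕ∞) < f ω}.indicator 1 ω ∂μ :=
        lintegral_tsum fun n => (measurable_one.indicator (hf n)).aemeasurable
    _ = ∑' n : ℕ, μ {ω | (n : ℕ∞) < f ω} :=
        tsum_congr fun n => lintegral_indicator_one (hf n)

lemma tsum_le_natCast_add_tsum {a b : ℕ → ℝ≥0∞} {N : ℕ} (ha : ∀ n, a n ≤ 1)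
    (hab : ∀ n, N ≤ n → a n ≤ b n) : ∑' n, a n ≤ N + ∑' n, b n := by
  have hhead : ∑ n ∈ Finset.range N, a n ≤ N := by
    simpa using Finset.sum_le_card_nsmul (Finset.range N) a 1 fun n _ => ha n
  have htail : ∑' n, a (n + N) ≤ ∑' n, b n := calc
    ∑' n, a (n + N) ≤ ∑' n, b (n + N) := ENNReal.tsum_le_tsum fun n => hab _ (N.le_add_left n)
    _ ≤ ∑' n, b n := ENNReal.tsum_comp_le_tsum_of_injective (add_left_injective N) b
  rw [← ENNReal.summable.sum_add_tsum_nat_add' (f := a) (k := N)]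
  exact add_le_add hhead htail

lemma natCast_floor_le_ofReal (x : ℝ) : (⌊x⌋₊ : ℝ≥0∞) ≤ ENNReal.ofReal x := by
  rcases eq_or_ne ⌊x⌋₊ 0 with hfloor | hfloor
  · simp [hfloor]
  · exact (ENNReal.natCast_le_ofReal hfloor).2
      (Nat.floor_le (Nat.pos_of_floor_pos (Nat.pos_of_ne_zero hfloor)).le)

namespace ChangePointModel

variable {Ω : Type} [m0 : MeasurableSpace Ω] (M : ChangePointModel Ω)

/-! ### The Shiryaev–Roberts stopping time -/

/-- The filtration `(F_n)` of the model, bundled. -/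
def filtration : Filtration ℕ m0 := ⟨M.F, M.F_mono, M.F_le⟩

lemma measurable_Z (n k : ℕ) : Measurable[M.F n] (M.Z n k) :=
  measurable_llr _ _

lemma measurable_SRstat (n : ℕ) : Measurable[M.F n] (M.SRstat n) := by
  unfold SRstat
  exact Finset.measurable_sum _ fun k _ => (M.measurable_Z n k).exp

lemma SRstat_nonneg (n : ℕ) (ω : Ω) : 0 ≤ M.SRstat n ω :=
  Finset.sum_nonneg fun _ _ => (Real.exp_pos _).le

lemma exp_Z_le_SRstat {n k : ℕ} (hk : k < n) (ω : Ω) : Real.exp (M.Z n k ω) ≤ M.SRstat n ω :=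
  Finset.single_le_sum (f := fun k => Real.exp (M.Z n k ω)) (fun _ _ => (Real.exp_pos _).le)
    (Finset.mem_range.2 hk)

lemma SR_le_iff {h : ℝ} (hh : 0 < h) {n : ℕ} {ω : Ω} :
    M.SR h ω ≤ n ↔ ∃ m ≤ n, h ≤ M.SRstat m ω := by
  constructor
  · intro hle
    have hne : {n : ℕ∞ | ∃ m : ℕ, n = (m : ℕ∞) ∧ 1 ≤ m ∧ h ≤ M.SRstat m ω}.Nonempty := by
      by_contra! hempty
      rw [SR, hempty, sInf_empty] at hle
      exact ENat.natCast_ne_top n (top_le_iff.1 hle)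
    obtain ⟨m, hm, -, hhm⟩ := csInf_mem hne
    exact ⟨m, Nat.cast_le.1 (hm.symm.trans_le hle), hhm⟩
  · rintro ⟨m, hmn, hhm⟩
    have hm : 1 ≤ m := by
      rw [Nat.one_le_iff_ne_zero]
      rintro rfl
      exact hh.not_ge (by simpa [SRstat] using hhm)
    calc M.SR h ω ≤ m := sInf_le ⟨m, rfl, hm, hhm⟩
      _ ≤ n := Nat.cast_le.2 hmn

lemma measurableSet_SR_le {h : ℝ} (hh : 0 < h) (n : ℕ) :
    MeasurableSet[M.F n] {ω | M.SR h ω ≤ n} := by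
  have hunion : {ω | M.SR h ω ≤ n} = ⋃ m ∈ Set.Iic n, {ω | h ≤ M.SRstat m ω} := by
    ext ω
    simp [M.SR_le_iff hh]
  rw [hunion]
  exact .biUnion (Set.to_countable _) fun m hm =>
    M.F_mono hm _ (M.measurable_SRstat m measurableSet_Ici)

lemma measurableSet_lt_SR {h : ℝ} (hh : 0 < h) (n : ℕ) :
    MeasurableSet {ω | (n : ℕ∞) < M.SR h ω} := by
  simpa only [compl_ofPred, not_le] using (M.F_le n _ (M.measurableSet_SR_le hh n)).compl

lemma Z_lt_log_of_lt_SR {h : ℝ} (hh : 0 < h) {n k : ℕ} (hk : k < n) {ω : Ω}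
    (hω : (n : ℕ∞) < M.SR h ω) : M.Z n k ω < Real.log h := by
  rw [Real.lt_log_iff_exp_lt hh]
  by_contra! hge
  exact hω.not_ge ((M.SR_le_iff hh).2 ⟨n, le_rfl, hge.trans (M.exp_Z_le_SRstat hk ω)⟩)

/-! ### False alarms -/

lemma exp_Z_ae_eq_rnDeriv {n k : ℕ} (hk : k < n) :
    (fun ω => Real.exp (M.Z n k ω)) =ᵐ[M.Pinf.trim (M.F_le n)] fun ω =>
      (((M.P k).trim (M.F_le n)).rnDeriv (M.Pinf.trim (M.F_le n)) ω).toReal := by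
  have := M.P_prob k
  have := M.Pinf_prob
  exact exp_llr_of_ac' _ _ (M.ac₂ k n hk)

lemma integrable_exp_Z {n k : ℕ} (hk : k < n) :
    Integrable (fun ω => Real.exp (M.Z n k ω)) M.Pinf := by
  have := M.P_prob k
  exact integrable_of_integrable_trim (M.F_le n)
    (Measure.integrable_toReal_rnDeriv.congr (M.exp_Z_ae_eq_rnDeriv hk).symm)

lemma setIntegral_exp_Z {n k : ℕ} (hk : k < n) {A : Set Ω} (hA : MeasurableSet[M.F n] A) :
    ∫ ω in A, Real.exp (M.Z n k ω) ∂M.Pinf = (M.P k).real A := by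
  have := M.P_prob k
  have := M.Pinf_prob
  rw [setIntegral_trim (M.F_le n) (M.measurable_Z n k).exp.stronglyMeasurable hA,
    integral_congr_ae (ae_restrict_of_ae (M.exp_Z_ae_eq_rnDeriv hk)),
    Measure.setIntegral_toReal_rnDeriv (M.ac₁ k n hk), measureReal_def, measureReal_def,
    trim_measurableSet_eq _ hA]

lemma integrable_SRstat (n : ℕ) : Integrable (M.SRstat n) M.Pinf :=
  integrable_finsetSum _ fun _ hk => M.integrable_exp_Z (Finset.mem_range.1 hk)

lemma setIntegral_SRstat {n : ℕ} {A : Set Ω} (hA : MeasurableSet[M.F n] A) :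
    ∫ ω in A, M.SRstat n ω ∂M.Pinf = ∑ k ∈ Finset.range n, (M.P k).real A := by
  unfold SRstat
  rw [integral_finsetSum _ fun k hk => (M.integrable_exp_Z (Finset.mem_range.1 hk)).integrableOn]
  exact Finset.sum_congr rfl fun k hk => M.setIntegral_exp_Z (Finset.mem_range.1 hk) hA

lemma setIntegral_SRstat_le {n : ℕ} {A : Set Ω} (hA : MeasurableSet[M.F n] A) :
    ∫ ω in A, M.SRstat n ω ∂M.Pinf ≤ n := by
  rw [M.setIntegral_SRstat hA]
  have hle_one : ∀ k ∈ Finset.range n, (M.P k).real A ≤ 1 := fun k _ => by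
    have := M.P_prob k
    exact measureReal_le_one
  simpa using Finset.sum_le_card_nsmul _ _ _ hle_one

lemma submartingale_SRstat : Submartingale M.SRstat M.filtration M.Pinf := by
  have := M.Pinf_prob
  refine submartingale_of_setIntegral_le_succ
    (fun n => (M.measurable_SRstat n).stronglyMeasurable) M.integrable_SRstat fun n A hA => ?_
  rw [M.setIntegral_SRstat hA, M.setIntegral_SRstat (M.F_mono n.le_succ A hA),
    Finset.sum_range_succ]
  exact le_add_of_nonneg_right measureReal_nonneg

lemma Pinf_SR_le {h : ℝ} (hh : 0 < h) (ν : ℕ) :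
    M.Pinf {ω | M.SR h ω ≤ ν} ≤ ENNReal.ofReal (ν / h) := by
  have := M.Pinf_prob
  lift h to NNReal using hh.le
  have hset : {ω | M.SR h ω ≤ ν} = {ω | (h : ℝ) ≤
      (Finset.range (ν + 1)).sup' Finset.nonempty_range_add_one fun n => M.SRstat n ω} := by
    ext ω
    simp [M.SR_le_iff hh]
  have hmul : h * M.Pinf {ω | M.SR h ω ≤ ν} ≤ ENNReal.ofReal ν := by
    have hdoob := maximal_ineq M.submartingale_SRstat M.SRstat_nonneg (ε := h) ν
    rw [← hset] at hdoob
    exact hdoob.trans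
      (ENNReal.ofReal_le_ofReal (M.setIntegral_SRstat_le (M.measurableSet_SR_le hh ν)))
  rw [ENNReal.ofReal_div_of_pos hh, ENNReal.ofReal_coe_nnreal]
  rwa [ENNReal.le_div_iff_mul_le (.inl (by exact_mod_cast hh.ne')) (.inl coe_ne_top), mul_comm]

lemma one_sub_le_P_lt_SR {h : ℝ} (hh : 0 < h) (ν : ℕ) :
    1 - ENNReal.ofReal (ν / h) ≤ M.P ν {ω | (ν : ℕ∞) < M.SR h ω} := by
  have := M.P_prob ν
  have hmeas := M.measurableSet_SR_le hh ν
  have hagree : M.P ν {ω | M.SR h ω ≤ ν} = M.Pinf {ω | M.SR h ω ≤ ν} := by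
    rw [← trim_measurableSet_eq (M.F_le ν) hmeas, M.agree ν ν le_rfl,
      trim_measurableSet_eq (M.F_le ν) hmeas]
  have hcompl : {ω | (ν : ℕ∞) < M.SR h ω} = {ω | M.SR h ω ≤ ν}ᶜ := by
    simp only [compl_ofPred, not_le]
  rw [hcompl, prob_compl_eq_one_sub (M.F_le ν _ hmeas), hagree]
  exact tsub_le_tsub_left (M.Pinf_SR_le hh ν) 1

lemma iSup_crisk_SR_le {h : ℝ} (hh : 0 < h) (k : ℕ) :
    ⨆ ν ∈ Set.Iic k, M.crisk ν (M.SR h) ≤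
      (⨆ ν, M.risk ν (M.SR h)) / (1 - ENNReal.ofReal (k / h)) := by
  refine iSup₂_le fun ν hν => ENNReal.div_le_div (le_iSup (fun ν => M.risk ν (M.SR h)) ν) ?_
  refine le_trans ?_ (M.one_sub_le_P_lt_SR hh ν)
  have hνk : (ν : ℝ) ≤ k := Nat.cast_le.2 hν
  gcongr

/-! ### Detection delay -/

/-- The worst-case probability `sup_k P_k(Z_{k+n}^k < J n)` that, `n` steps after the change, the
log-likelihood ratio has grown more slowly than at rate `J`. Summability over `n` for every `J < I`
is the left-tail half of (A2). -/
def slowGrowthProb (J : ℝ) (n : ℕ) : ℝ≥0∞ :=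
  ⨆ k : ℕ, M.P k {ω | M.Z (k + n) k ω < J * n}

lemma slowGrowthProb_le_one (J : ℝ) (n : ℕ) : M.slowGrowthProb J n ≤ 1 :=
  iSup_le fun k => have := M.P_prob k; prob_le_one

variable {M} in
lemma CondA2.tsum_slowGrowthProb_ne_top {I J : ℝ} (hA2 : M.CondA2 I) (hJ : J < I) :
    ∑' n, M.slowGrowthProb J n ≠ ⊤ := by
  have hle (n : ℕ) : M.slowGrowthProb J (n + 1) ≤
      ⨆ k : ℕ, M.P k {ω | I - J < |M.Z (k + (n + 1)) k ω / (n + 1) - I|} := by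
    refine iSup_mono fun k => measure_mono fun ω hω => ?_
    have hratio : M.Z (k + (n + 1)) k ω / (n + 1) < J :=
      (div_lt_iff₀ (by positivity)).2 (by simpa using hω)
    have hdev : I - J < -(M.Z (k + (n + 1)) k ω / (n + 1) - I) := by linarith
    exact hdev.trans_le (neg_le_abs _)
  rw [tsum_eq_zero_add' ENNReal.summable]
  exact ENNReal.add_ne_top.2 ⟨ne_top_of_le_ne_top one_ne_top (M.slowGrowthProb_le_one J 0),
    ne_top_of_le_ne_top (hA2 (I - J) (sub_pos.2 hJ)).ne (ENNReal.tsum_le_tsum hle)⟩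

lemma risk_SR_eq_tsum {h : ℝ} (hh : 0 < h) (ν : ℕ) :
    M.risk ν (M.SR h) = ∑' n : ℕ, M.P ν {ω | ((ν + n : ℕ) : ℕ∞) < M.SR h ω} := by
  have htail (n : ℕ) : {ω | (n : ℕ∞) < M.SR h ω - ν} = {ω | ((ν + n : ℕ) : ℕ∞) < M.SR h ω} := by
    simp only [lt_tsub_iff_left, Nat.cast_add]
  rw [risk, lintegral_toENNReal_eq_tsum_measure_lt]
  · simp only [htail]
  · exact fun n => htail n ▸ M.measurableSet_lt_SR hh (ν + n)

lemma P_lt_SR_le_slowGrowthProb {h J : ℝ} (hh : 0 < h) {n : ℕ} (hn : 0 < n)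
    (hlog : Real.log h ≤ J * n) (ν : ℕ) :
    M.P ν {ω | ((ν + n : ℕ) : ℕ∞) < M.SR h ω} ≤ M.slowGrowthProb J n := by
  have hsub : {ω | ((ν + n : ℕ) : ℕ∞) < M.SR h ω} ⊆ {ω | M.Z (ν + n) ν ω < J * n} := fun ω hω =>
    (M.Z_lt_log_of_lt_SR hh (Nat.lt_add_of_pos_right hn) hω).trans_le hlog
  exact (measure_mono hsub).trans (le_iSup (fun k => M.P k {ω | M.Z (k + n) k ω < J * n}) ν)

lemma risk_SR_le {h J : ℝ} (hh : 0 < h) (hJ : 0 < J) (ν : ℕ) :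
    M.risk ν (M.SR h) ≤
      ENNReal.ofReal (Real.log h / J) + (1 + ∑' n, M.slowGrowthProb J n) := by
  have := M.P_prob ν
  set m := ⌊Real.log h / J⌋₊
  have htail (n : ℕ) (hn : m + 1 ≤ n) :
      M.P ν {ω | ((ν + n : ℕ) : ℕ∞) < M.SR h ω} ≤ M.slowGrowthProb J n :=
    M.P_lt_SR_le_slowGrowthProb hh (by omega)
      ((div_le_iff₀' hJ).1 ((Nat.lt_of_floor_lt hn).le)) ν
  calc M.risk ν (M.SR h)
      = ∑' n : ℕ, M.P ν {ω | ((ν + n : ℕ) : ℕ∞) < M.SR h ω} := M.risk_SR_eq_tsum hh ν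
    _ ≤ (m + 1 : ℕ) + ∑' n, M.slowGrowthProb J n :=
        tsum_le_natCast_add_tsum (fun _ => prob_le_one) htail
    _ ≤ ENNReal.ofReal (Real.log h / J) + (1 + ∑' n, M.slowGrowthProb J n) := by
        rw [Nat.cast_add, Nat.cast_one, add_assoc]
        gcongr
        exact natCast_floor_le_ofReal _

/-! ### Asymptotics for large thresholds -/

section Asymptotics

open Asymptotics

variable {ι : Type*} {l : Filter ι} {h L : ι → ℝ}

lemma limsup_iSup_risk_SR_div_le_of_tsum_ne_top {J : ℝ} (hJ : 0 < J)
    (hslow : ∑' n, M.slowGrowthProb J n ≠ ⊤) (hh : Tendsto h l atTop)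
    (hL : (fun i => Real.log (h i)) ~[l] L) :
    limsup (fun i => (⨆ ν, M.risk ν (M.SR (h i))) / ENNReal.ofReal (L i)) l ≤
      ENNReal.ofReal (1 / J) := by
  have hLtop : Tendsto L l atTop := hL.tendsto_atTop (Real.tendsto_log_atTop.comp hh)
  have hmain : Tendsto (fun i => ENNReal.ofReal (Real.log (h i) / J / L i)) l
      (𝓝 (ENNReal.ofReal (1 / J))) := by
    have hratio : Tendsto (fun i => Real.log (h i) / L i) l (𝓝 1) :=
      (isEquivalent_iff_tendsto_one (hLtop.eventually_ne_atTop 0)).1 hL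
    refine ENNReal.tendsto_ofReal ((hratio.div_const J).congr fun i => ?_)
    exact div_right_comm _ _ _
  have hrest : Tendsto (fun i => (1 + ∑' n, M.slowGrowthProb J n) / ENNReal.ofReal (L i)) l
      (𝓝 0) := by
    have hdiv := ENNReal.Tendsto.const_div (a := 1 + ∑' n, M.slowGrowthProb J n)
      (ENNReal.tendsto_ofReal_nhds_top.2 hLtop) (.inr (by simpa using hslow))
    rwa [ENNReal.div_top] at hdiv
  have hlim := hmain.add hrest
  rw [add_zero] at hlim
  rcases l.eq_or_neBot with rfl | _
  · simp
  refine le_of_le_of_eq (limsup_le_limsup ?_) hlim.limsup_eq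
  filter_upwards [hh.eventually_gt_atTop 0, hLtop.eventually_gt_atTop 0] with i hhi hLi
  rw [ENNReal.ofReal_div_of_pos hLi, ← ENNReal.add_div]
  gcongr
  exact iSup_le fun ν => M.risk_SR_le hhi hJ ν

theorem limsup_iSup_risk_SR_div_le {I : ℝ} (hI : 0 < I)
    (hslow : ∀ J ∈ Ioo 0 I, ∑' n, M.slowGrowthProb J n ≠ ⊤) (hh : Tendsto h l atTop)
    (hL : (fun i => Real.log (h i)) ~[l] L) :
    limsup (fun i => (⨆ ν, M.risk ν (M.SR (h i))) / ENNReal.ofReal (L i)) l ≤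
      ENNReal.ofReal (1 / I) := by
  have hlim : Tendsto (fun J : ℝ => ENNReal.ofReal (1 / J)) (𝓝[<] I)
      (𝓝 (ENNReal.ofReal (1 / I))) :=
    ENNReal.tendsto_ofReal
      ((continuousAt_const.div continuousAt_id hI.ne').tendsto.mono_left nhdsWithin_le_nhds)
  refine ge_of_tendsto hlim ?_
  filter_upwards [Ioo_mem_nhdsLT hI] with J hJ
  exact M.limsup_iSup_risk_SR_div_le_of_tsum_ne_top hJ.1 (hslow J hJ) hh hL

theorem limsup_iSup_crisk_SR_div_le {I : ℝ} (hI : 0 < I)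
    (hslow : ∀ J ∈ Ioo 0 I, ∑' n, M.slowGrowthProb J n ≠ ⊤) (hh : Tendsto h l atTop)
    (hL : (fun i => Real.log (h i)) ~[l] L) {k : ι → ℕ}
    (hk : Tendsto (fun i => k i / h i) l (𝓝 0)) :
    limsup (fun i => (⨆ ν ∈ Set.Iic (k i), M.crisk ν (M.SR (h i))) / ENNReal.ofReal (L i)) l ≤
      ENNReal.ofReal (1 / I) := by
  have hrisk := M.limsup_iSup_risk_SR_div_le hI hslow hh hL
  rcases l.eq_or_neBot with rfl | _
  · simp
  have hfactor : limsup (fun i => (1 - ENNReal.ofReal (k i / h i))⁻¹) l = 1 := by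
    have hsub := ENNReal.Tendsto.sub (tendsto_const_nhds (x := (1 : ℝ≥0∞)))
      (ENNReal.tendsto_ofReal hk) (.inl one_ne_top)
    rw [ENNReal.ofReal_zero, tsub_zero] at hsub
    simpa using (tendsto_inv_iff.2 hsub).limsup_eq
  calc limsup (fun i => (⨆ ν ∈ Set.Iic (k i), M.crisk ν (M.SR (h i))) / ENNReal.ofReal (L i)) l
      ≤ limsup ((fun i => (⨆ ν, M.risk ν (M.SR (h i))) / ENNReal.ofReal (L i)) *
          fun i => (1 - ENNReal.ofReal (k i / h i))⁻¹) l := by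
        refine limsup_le_limsup ?_
        filter_upwards [hh.eventually_gt_atTop 0] with i hhi
        refine (ENNReal.div_le_div_right (M.iSup_crisk_SR_le hhi (k i)) _).trans_eq ?_
        simp only [Pi.mul_apply, div_eq_mul_inv, mul_right_comm]
    _ ≤ limsup (fun i => (⨆ ν, M.risk ν (M.SR (h i))) / ENNReal.ofReal (L i)) l *
          limsup (fun i => (1 - ENNReal.ofReal (k i / h i))⁻¹) l :=
        ENNReal.limsup_mul_le' (.inr (by simp [hfactor])) (.inr (by simp [hfactor]))
    _ ≤ ENNReal.ofReal (1 / I) := by rwa [hfactor, mul_one]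

end Asymptotics

end ChangePointModel

/-! ### The threshold `(1 - α) / (ϱ_α α)` -/

section Threshold

open Asymptotics

variable {ϱ : ℝ → ℝ}

lemma tendsto_abs_log_nhdsGT_zero : Tendsto (fun α : ℝ => |Real.log α|) (𝓝[>] 0) atTop :=
  tendsto_abs_atBot_atTop.comp Real.tendsto_log_nhdsGT_zero

lemma tendsto_one_sub_nhdsGT_zero : Tendsto (fun α : ℝ => 1 - α) (𝓝[>] 0) (𝓝 1) := by
  have hcont : Tendsto (fun α : ℝ => 1 - α) (𝓝 0) (𝓝 (1 - 0)) := tendsto_const_nhds.sub tendsto_id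
  rw [sub_zero] at hcont
  exact hcont.mono_left nhdsWithin_le_nhds

lemma tendsto_threshold_atTop (hϱ : ∀ᶠ α in 𝓝[>] 0, ϱ α ∈ Ioo 0 1) :
    Tendsto (fun α => (1 - α) / (ϱ α * α)) (𝓝[>] 0) atTop := by
  have hinv : Tendsto (fun α : ℝ => (1 - α) * α⁻¹) (𝓝[>] 0) atTop :=
    tendsto_one_sub_nhdsGT_zero.pos_mul_atTop one_pos tendsto_inv_nhdsGT_zero
  refine tendsto_atTop_mono' _ ?_ hinv
  filter_upwards [hϱ, Ioo_mem_nhdsGT one_pos] with α ⟨hϱ0, hϱ1⟩ ⟨hα0, hα1⟩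
  rw [← div_eq_mul_inv]
  exact div_le_div_of_nonneg_left (sub_pos.2 hα1).le (mul_pos hϱ0 hα0)
    (mul_le_of_le_one_left hα0.le hϱ1.le)

lemma isEquivalent_log_threshold (hϱ : ∀ᶠ α in 𝓝[>] 0, ϱ α ∈ Ioo 0 1)
    (hϱlog : Tendsto (fun α => |Real.log (ϱ α)| / |Real.log α|) (𝓝[>] 0) (𝓝 0)) :
    (fun α => Real.log ((1 - α) / (ϱ α * α))) ~[𝓝[>] 0] fun α => |Real.log α| := by
  have hlittle {u : ℝ → ℝ} (hu : Tendsto (fun α => u α / |Real.log α|) (𝓝[>] 0) (𝓝 0)) :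
      u =o[𝓝[>] 0] fun α => |Real.log α| :=
    isLittleO_of_tendsto' ((tendsto_abs_log_nhdsGT_zero.eventually_ne_atTop 0).mono
      fun _ hne hzero => absurd hzero hne) hu
  have hlog_one_sub : Tendsto (fun α : ℝ => Real.log (1 - α)) (𝓝[>] 0) (𝓝 0) := by
    simpa using tendsto_one_sub_nhdsGT_zero.log one_ne_zero
  have hdiff := (hlittle (hlog_one_sub.div_atTop tendsto_abs_log_nhdsGT_zero)).add (hlittle hϱlog)
  refine hdiff.congr' ?_ .rfl
  filter_upwards [hϱ, Ioo_mem_nhdsGT one_pos] with α ⟨hϱ0, hϱ1⟩ ⟨hα0, hα1⟩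
  rw [Pi.sub_apply, Real.log_div (by linarith) (by positivity), Real.log_mul hϱ0.ne' hα0.ne',
    abs_of_neg (Real.log_neg hϱ0 hϱ1), abs_of_neg (Real.log_neg hα0 hα1)]
  ring

lemma tendsto_abs_log_mul_div_one_sub :
    Tendsto (fun α : ℝ => |Real.log α| * α / (1 - α)) (𝓝[>] 0) (𝓝 0) := by
  have hnum : Tendsto (fun α : ℝ => |Real.log α| * α) (𝓝[>] 0) (𝓝 0) := by
    have habs := (tendsto_log_mul_rpow_nhdsGT_zero one_pos).abs
    rw [abs_zero] at habs
    refine habs.congr' ?_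
    filter_upwards [self_mem_nhdsWithin] with α hα
    rw [Real.rpow_one, abs_mul, abs_of_pos (mem_Ioi.1 hα)]
  simpa [Pi.div_def] using hnum.div tendsto_one_sub_nhdsGT_zero one_ne_zero

lemma mul_le_neg_mul_log_one_sub {x r : ℝ} (hx : 0 ≤ x) (hr : r < 1) :
    x * r ≤ -(x * Real.log (1 - r)) := by
  have hlog := Real.log_le_sub_one_of_pos (sub_pos.2 hr)
  nlinarith

lemma tendsto_natCast_div_threshold {k : ℝ → ℕ} (hϱ : ∀ᶠ α in 𝓝[>] 0, ϱ α ∈ Ioo 0 1)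
    (hk : ∀ᶠ α in 𝓝[>] 0, 0 ≤ |Real.log α| + k α * Real.log (1 - ϱ α)) :
    Tendsto (fun α => k α / ((1 - α) / (ϱ α * α))) (𝓝[>] 0) (𝓝 0) := by
  refine squeeze_zero' ?_ ?_ tendsto_abs_log_mul_div_one_sub
  · filter_upwards [(tendsto_threshold_atTop hϱ).eventually_ge_atTop 0] with α hα
    positivity
  · filter_upwards [hϱ, hk, Ioo_mem_nhdsGT one_pos] with α hϱα hkα ⟨hα0, hα1⟩
    have hkϱ : k α * ϱ α ≤ |Real.log α| := by
      linarith [mul_le_neg_mul_log_one_sub (k α).cast_nonneg hϱα.2]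
    rw [div_div_eq_mul_div, ← mul_assoc]
    exact div_le_div_of_nonneg_right (mul_le_mul_of_nonneg_right hkϱ hα0.le) (sub_pos.2 hα1).le

theorem statement2_general {Ω : Type} [MeasurableSpace Ω] (M : ChangePointModel Ω)
    {I : ℝ} (hI : 0 < I) (hslow : ∀ J ∈ Ioo 0 I, ∑' n, M.slowGrowthProb J n ≠ ⊤)
    {ι : Type*} {l : Filter ι} {h L : ι → ℝ} (hh : Tendsto h l atTop)
    (hL : (fun i => Real.log (h i)) ~[l] L) :
    limsup (fun i => (⨆ ν, M.risk ν (M.SR (h i))) / ENNReal.ofReal (L i)) l ≤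
      ENNReal.ofReal (1 / I) ∧
    ∀ k : ι → ℕ, Tendsto (fun i => k i / h i) l (𝓝 0) →
      limsup (fun i => (⨆ ν ∈ Set.Iic (k i), M.crisk ν (M.SR (h i))) / ENNReal.ofReal (L i)) l ≤
        ENNReal.ofReal (1 / I) :=
  ⟨M.limsup_iSup_risk_SR_div_le hI hslow hh hL,
    fun _ hk => M.limsup_iSup_crisk_SR_div_le hI hslow hh hL hk⟩

end Threshold

/-- Under condition (A2) and `ϱ_α → 0`, `|log ϱ_α|/|log α| → 0`,
the SR procedure `T_α = T((1-α)/(ϱ_α α))` satisfies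
(i) `limsup_{α→0} sup_ν R_ν(T_α)/|log α| ≤ 1/I`, and
(ii) if moreover `k*_α → ∞` and `|log α| + k*_α log(1-ϱ_α) → +∞`, then
`limsup_{α→0} max_{0≤ν≤k*_α} R*_ν(T_α)/|log α| ≤ 1/I`. -/
theorem statement2
    {Ω : Type} [m0 : MeasurableSpace Ω] (M : ChangePointModel Ω)
    (I : ℝ) (hI : 0 < I) (hA2 : M.CondA2 I)
    (ϱ : ℝ → ℝ) (hϱmem : ∀ α ∈ Set.Ioo (0 : ℝ) 1, ϱ α ∈ Set.Ioo (0 : ℝ) 1)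
    (hϱ0 : Tendsto ϱ (𝓝[>] (0 : ℝ)) (𝓝 0))
    (hϱlog : Tendsto (fun α : ℝ => |Real.log (ϱ α)| / |Real.log α|) (𝓝[>] (0 : ℝ)) (𝓝 0)) :
    (Filter.limsup (fun α : ℝ =>
        (⨆ ν : ℕ, M.risk ν (M.SR ((1 - α) / (ϱ α * α)))) / ENNReal.ofReal |Real.log α|)
        (𝓝[>] (0 : ℝ)) ≤ ENNReal.ofReal (1 / I)) ∧
    (∀ kstar : ℝ → ℕ,
      Tendsto kstar (𝓝[>] (0 : ℝ)) atTop →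
      Tendsto (fun α : ℝ => |Real.log α| + (kstar α : ℝ) * Real.log (1 - ϱ α))
        (𝓝[>] (0 : ℝ)) atTop →
      Filter.limsup (fun α : ℝ =>
        (⨆ ν ∈ Set.Iic (kstar α), M.crisk ν (M.SR ((1 - α) / (ϱ α * α))))
          / ENNReal.ofReal |Real.log α|)
        (𝓝[>] (0 : ℝ)) ≤ ENNReal.ofReal (1 / I)) := by
  have hϱ : ∀ᶠ α in 𝓝[>] 0, ϱ α ∈ Ioo 0 1 := eventually_of_mem (Ioo_mem_nhdsGT one_pos) hϱmem
  obtain ⟨hrisk, hcrisk⟩ := statement2_general M hI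
    (fun _ hJ => hA2.tsum_slowGrowthProb_ne_top hJ.2) (tendsto_threshold_atTop hϱ)
    (isEquivalent_log_threshold hϱ hϱlog)
  exact ⟨hrisk, fun k _ hk =>
    hcrisk k (tendsto_natCast_div_threshold hϱ (hk.eventually_ge_atTop 0))⟩
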